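/- arXiv:1201.6103 — 2 statements merged into one kernel-verified Lean document; each statement's English description precedes it below -/
import Mathlib

section
/- Let b ≥ 2 and η > 0, and let ψ : [0,∞) → [0,∞) be a decreasing differentiable function with −η ≤ ψ'(s) ≤ 0 and A := ∫₀^∞ s^{b−1} ψ(s) ds ∈ (0, ∞). Then ∫₀^∞ s^{b+3} ψ(s) ds ≥ (1/(b+4))·(bA)^{(b+4)/b}·ψ(0)^{−4/b} + (1/(3b(b+4)η²))·(bA)^{(b+2)/b}·ψ(0)^{(2b−2)/b} + ((b+2)²/(72b(b+4)²η⁴))·A·ψ(0)^4. -/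
open Real MeasureTheory Set

lemma aux_amgm (θ y : ℝ) (h0 : 0 ≤ θ) (h1 : θ ≤ 1) (hy : 0 ≤ y) : y ^ θ ≤ θ * y + (1 - θ) := by
  have := Real.geom_mean_le_arith_mean2_weighted h0 (sub_nonneg.2 h1) hy zero_le_one (by ring)
  simpa using this

lemma aux_poly (b x : ℝ) (hb : 2 ≤ b) (hx : 0 ≤ x) :
    (x - 1) ^ 2 * (4 + 8 * x) ≤ b * x ^ (b + 4) - (b + 4) * x ^ b + 4 := by
  have hb2 : 0 < b + 2 := by linarith
  have hy : 0 ≤ x ^ (b + 2) := by positivity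
  have e1 := aux_amgm ((b - 2) / (b + 2)) (x ^ (b + 2)) (div_nonneg (by linarith) hb2.le)
    ((div_le_one hb2).2 (by linarith)) hy
  have e2 := aux_amgm (1 / (b + 2)) (x ^ (b + 2)) (by positivity)
    ((div_le_one hb2).2 (by linarith)) hy
  rw [← rpow_mul hx, mul_div_cancel₀ _ hb2.ne'] at e1 e2
  rw [rpow_one] at e2
  have e3 : (b + 4) * x ^ (b - 2) + 8 * x ≤ b * x ^ (b + 2) + 12 := by
    calc _ ≤ (b + 4) * ((b - 2) / (b + 2) * x ^ (b + 2) + (1 - (b - 2) / (b + 2)))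
          + 8 * (1 / (b + 2) * x ^ (b + 2) + (1 - 1 / (b + 2))) := by gcongr
      _ = _ := by field_simp; ring
  have f1 : x ^ (b + 4) = x ^ (b + 2) * x ^ 2 := by
    rw [show b + 4 = (b + 2) + (2 : ℕ) by push_cast; ring, rpow_add_natCast' hx (by push_cast; linarith)]
  have f2 : x ^ b = x ^ (b - 2) * x ^ 2 := by
    conv_lhs => rw [show b = (b - 2) + (2 : ℕ) by push_cast; ring]
    rw [rpow_add_natCast' hx (by push_cast; linarith)]
  rw [f1, f2]
  nlinarith [mul_le_mul_of_nonneg_right e3 (sq_nonneg x)]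

lemma aux_F (b t s : ℝ) (hb : 2 ≤ b) (ht : 0 < t) (hs : 0 ≤ s) :
    t ^ (b + 1) * ((s - t) ^ 2 * (4 * t + 8 * s)) ≤
      b * s ^ (b + 4) - (b + 4) * t ^ 4 * s ^ b + 4 * t ^ (b + 4) := by
  have h := aux_poly b (s / t) hb (by positivity)
  rw [div_rpow hs ht.le, div_rpow hs ht.le] at h
  have f1 : t ^ (b + 4) = t ^ b * t ^ 4 := by
    rw [show b + 4 = b + (4 : ℕ) by push_cast; ring, rpow_add_natCast ht.ne']
  have f2 : t ^ (b + 1) = t ^ b * t := by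
    rw [rpow_add_one ht.ne']
  have hp : 0 < t ^ b := by positivity
  rw [f1] at h
  have h' := mul_le_mul_of_nonneg_left h (show 0 ≤ t ^ b * t ^ 4 by positivity)
  rw [f1, f2]
  calc _ = t ^ b * t ^ 4 * ((s / t - 1) ^ 2 * (4 + 8 * (s / t))) := by field_simp
    _ ≤ _ := h'
    _ = _ := by field_simp

/-- the bathtub minorant -/
lemma aux_min (b t w s : ℝ) (hb : 2 ≤ b) (ht : 0 < t) (hw : 0 < w) (hwt : w ^ 2 ≤ 3 * t ^ 2)
    (hs : 0 ≤ s) :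
    (14 / 3 * t ^ (b + 2)) * (w ^ 2 / 4 - max (w ^ 2 / 4 - (s - t) ^ 2) 0) ≤
      b * s ^ (b + 4) - (b + 4) * t ^ 4 * s ^ b + 4 * t ^ (b + 4) := by
  refine le_trans ?_ (aux_F b t s hb ht hs)
  have f2 : t ^ (b + 2) = t ^ (b + 1) * t := by
    rw [← rpow_add_one ht.ne']; ring_nf
  have hp : 0 < t ^ (b + 1) := by positivity
  have hw1 : w ≤ 1.75 * t := by nlinarith
  rw [f2]
  suffices 14 / 3 * t * (w ^ 2 / 4 - max (w ^ 2 / 4 - (s - t) ^ 2) 0) ≤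
      (s - t) ^ 2 * (4 * t + 8 * s) by
    nlinarith [mul_le_mul_of_nonneg_left this hp.le]
  rcases le_total (w ^ 2 / 4 - (s - t) ^ 2) 0 with h | h
  · rw [max_eq_right h]
    have h1 : w ^ 2 / 4 ≤ (s - t) ^ 2 := by linarith
    rcases le_total s t with hst | hst
    · have h2 : w / 2 ≤ t - s := by nlinarith
      -- u = t - s in [w/2, t]
      obtain ⟨u, rfl⟩ : ∃ u, s = t - u := ⟨t - s, by ring⟩
      have hu : w / 2 ≤ u := by linarith
      have hut : u ≤ t := by linarith
      have : (w / 2) ^ 2 * (12 * t - 8 * (w / 2)) ≤ u ^ 2 * (12 * t - 8 * u) := by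
        have e : u ^ 2 * (12 * t - 8 * u) - (w / 2) ^ 2 * (12 * t - 8 * (w / 2)) =
          (u - w / 2) * (12 * t * (u + w / 2) - 8 * (u ^ 2 + u * (w / 2) + (w / 2) ^ 2)) := by ring
        have hv : w / 2 ≤ t := by linarith
        have : 0 ≤ 12 * t * (u + w / 2) - 8 * (u ^ 2 + u * (w / 2) + (w / 2) ^ 2) := by
          nlinarith [mul_nonneg (sub_nonneg.2 hut) (by linarith : 0 ≤ u),
            mul_nonneg (sub_nonneg.2 hut) hw.le, mul_nonneg (sub_nonneg.2 hv) hw.le,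
            mul_nonneg (sub_nonneg.2 hv) (by linarith : 0 ≤ u), mul_nonneg (sub_nonneg.2 hu) hw.le,
            mul_nonneg (sub_nonneg.2 hu) (by linarith : 0 ≤ u), sq_nonneg (u - w / 2)]
        nlinarith [mul_nonneg (sub_nonneg.2 hu) this]
      nlinarith [mul_nonneg (sq_nonneg w) (by linarith : 0 ≤ 1.75 * t - w), mul_nonneg (sq_nonneg w) ht.le]
    · nlinarith [mul_le_mul_of_nonneg_right h1 ht.le, mul_nonneg (sq_nonneg (s - t)) (sub_nonneg.2 hst), mul_nonneg (sq_nonneg (s - t)) ht.le]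
  · rw [max_eq_left h]
    have h2 : t - s ≤ w / 2 := by nlinarith
    have : 0 ≤ 4 * t + 8 * s - 14 / 3 * t := by nlinarith
    nlinarith [mul_nonneg (sq_nonneg (s - t)) this]

lemma aux_bump (t w R : ℝ) (hw : 0 < w) (h1 : w / 2 ≤ t) (h2 : t + w / 2 ≤ R) :
    ∫ s in (0 : ℝ)..R, max (w ^ 2 / 4 - (s - t) ^ 2) 0 = w ^ 3 / 6 := by
  have hc : Continuous fun s : ℝ => max (w ^ 2 / 4 - (s - t) ^ 2) 0 := by fun_prop
  have hi : ∀ a c : ℝ, IntervalIntegrable (fun s : ℝ => max (w ^ 2 / 4 - (s - t) ^ 2) 0) volume a c :=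
    fun a c => hc.intervalIntegrable a c
  rw [← intervalIntegral.integral_add_adjacent_intervals (hi 0 (t - w / 2)) (hi _ R),
    ← intervalIntegral.integral_add_adjacent_intervals (hi (t - w / 2) (t + w / 2)) (hi _ R)]
  have a1 : ∫ s in (0 : ℝ)..(t - w / 2), max (w ^ 2 / 4 - (s - t) ^ 2) 0 = 0 := by
    rw [intervalIntegral.integral_congr (g := fun _ => (0 : ℝ))]
    · simp
    · intro s hs
      rw [uIcc_of_le (by linarith)] at hs
      refine max_eq_right ?_
      nlinarith [hs.1, hs.2]
  have a2 : ∫ s in (t + w / 2)..R, max (w ^ 2 / 4 - (s - t) ^ 2) 0 = 0 := by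
    rw [intervalIntegral.integral_congr (g := fun _ => (0 : ℝ))]
    · simp
    · intro s hs
      rw [uIcc_of_le (by linarith)] at hs
      refine max_eq_right ?_
      nlinarith [hs.1, hs.2]
  have a3 : ∫ s in (t - w / 2)..(t + w / 2), max (w ^ 2 / 4 - (s - t) ^ 2) 0 = w ^ 3 / 6 := by
    rw [intervalIntegral.integral_congr (g := fun s => w ^ 2 / 4 - (s - t) ^ 2)]
    · rw [intervalIntegral.integral_eq_sub_of_hasDerivAt
        (f := fun s => w ^ 2 / 4 * s - (s - t) ^ 3 / 3)]
      · ring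
      · intro x _
        have := (((hasDerivAt_id x).sub_const t).pow 3).div_const 3
        have := ((hasDerivAt_id x).const_mul (w ^ 2 / 4)).sub this
        refine HasDerivAt.congr_deriv (f := fun s => w ^ 2 / 4 * s - (s - t) ^ 3 / 3) this ?_
        simp
      · exact (by fun_prop : Continuous fun s : ℝ => w ^ 2 / 4 - (s - t) ^ 2).intervalIntegrable _ _
    · intro s hs
      rw [uIcc_of_le (by linarith)] at hs
      refine max_eq_left ?_
      nlinarith [hs.1, hs.2]
  rw [a1, a2, a3]; ring

lemma aux_lip (η : ℝ) (ψ : ℝ → ℝ) (hdiff : Differentiable ℝ ψ)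
    (hderiv : ∀ s, 0 ≤ s → -η ≤ deriv ψ s ∧ deriv ψ s ≤ 0) (s : ℝ) (hs : 0 ≤ s) :
    ψ 0 - η * s ≤ ψ s := by
  have hm : MonotoneOn (fun s => ψ s + η * s) (Ici 0) := by
    have hd : ∀ x, HasDerivAt (fun s => ψ s + η * s) (deriv ψ x + η * 1) x := fun x =>
      (hdiff x).hasDerivAt.add ((hasDerivAt_id x).const_mul η)
    refine monotoneOn_of_deriv_nonneg (convex_Ici 0)
      (fun x _ => (hd x).continuousAt.continuousWithinAt)
      (fun x _ => (hd x).differentiableAt.differentiableWithinAt) ?_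
    intro x hx
    rw [interior_Ici] at hx
    rw [(hd x).deriv]
    linarith [(hderiv x (le_of_lt hx)).1]
  have := hm (self_mem_Ici) hs hs
  simp at this
  linarith

lemma aux_lower (b η : ℝ) (hb : 2 ≤ b) (hη : 0 < η) (ψ : ℝ → ℝ)
    (hpos : ∀ s, 0 ≤ s → 0 ≤ ψ s)
    (hdiff : Differentiable ℝ ψ)
    (hderiv : ∀ s, 0 ≤ s → -η ≤ deriv ψ s ∧ deriv ψ s ≤ 0)
    (hM : 0 < ψ 0)
    (hAint : IntegrableOn (fun s => s ^ (b - 1) * ψ s) (Ioi 0)) :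
    ψ 0 * (ψ 0 / η) ^ b / (b * (b + 1)) ≤ ∫ s in Ioi (0 : ℝ), s ^ (b - 1) * ψ s := by
  set w := ψ 0 / η with hw
  have hw0 : 0 < w := by positivity
  have hM' : ψ 0 = η * w := by rw [hw]; field_simp
  have hcont : Continuous fun s : ℝ => s ^ (b - 1) := continuous_rpow_const (by linarith)
  calc ψ 0 * w ^ b / (b * (b + 1)) = ∫ s in (0 : ℝ)..w, s ^ (b - 1) * (ψ 0 - η * s) := by
        rw [intervalIntegral.integral_eq_sub_of_hasDerivAt
          (f := fun s => ψ 0 / b * s ^ b - η / (b + 1) * s ^ (b + 1))]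
        · rw [zero_rpow (by linarith), zero_rpow (by linarith), rpow_add_one hw0.ne', hM']
          field_simp; ring
        · intro x hx
          rw [uIcc_of_le hw0.le] at hx
          have h1 := (hasDerivAt_rpow_const (x := x) (p := b) (Or.inr (by linarith))).const_mul (ψ 0 / b)
          have h2 := (hasDerivAt_rpow_const (x := x) (p := b + 1) (Or.inr (by linarith))).const_mul (η / (b + 1))
          refine HasDerivAt.congr_deriv (f := fun s => ψ 0 / b * s ^ b - η / (b + 1) * s ^ (b + 1)) (h1.sub h2) ?_
          have : x ^ b = x ^ (b - 1) * x := by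
            conv_lhs => rw [show b = (b - 1) + 1 by ring]
            rw [rpow_add_one' hx.1 (by linarith)]
          rw [add_sub_cancel_right, this]
          field_simp
        · exact (hcont.mul (by fun_prop)).intervalIntegrable _ _
    _ ≤ ∫ s in (0 : ℝ)..w, s ^ (b - 1) * ψ s := by
        apply intervalIntegral.integral_mono_on hw0.le
        · exact (hcont.mul (by fun_prop)).intervalIntegrable _ _
        · exact (hcont.mul hdiff.continuous).intervalIntegrable _ _
        · intro x hx
          exact mul_le_mul_of_nonneg_left (aux_lip η ψ hdiff hderiv x hx.1) (rpow_nonneg hx.1 _)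
    _ ≤ _ := by
        rw [intervalIntegral.integral_of_le hw0.le]
        apply setIntegral_mono_set hAint
        · filter_upwards [ae_restrict_mem measurableSet_Ioi] with x hx
          exact mul_nonneg (rpow_nonneg (le_of_lt hx) _) (hpos x (le_of_lt hx))
        · exact Ioc_subset_Ioi_self.eventuallyLE

lemma aux_tau (b t w : ℝ) (hb : 2 ≤ b) (ht : 0 < t) (hw : 0 < w) (h : w ^ b ≤ (b + 1) * t ^ b) :
    w ^ 2 ≤ 3 * t ^ 2 := by
  have h1 : b + 1 ≤ 3 ^ (b / 2) := by
    have := one_add_mul_self_le_rpow_one_add (s := 2) (by norm_num) (p := b / 2) (by linarith)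
    norm_num at this
    linarith
  have h2 : (w ^ 2) ^ (b / 2) ≤ (3 * t ^ 2) ^ (b / 2) := by
    rw [mul_rpow (by norm_num) (by positivity)]
    have e : ∀ x : ℝ, 0 < x → (x ^ 2) ^ (b / 2) = x ^ b := by
      intro x hx
      rw [← rpow_natCast, ← rpow_mul hx.le]; congr 1; push_cast; ring
    rw [e _ hw, e _ ht]
    refine h.trans ?_
    gcongr
  exact (rpow_le_rpow_iff (by positivity) (by positivity) (by positivity)).1 h2

lemma aux_main (b η : ℝ) (hb : 2 ≤ b) (hη : 0 < η) (ψ : ℝ → ℝ)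
    (hpos : ∀ s, 0 ≤ s → 0 ≤ ψ s)
    (hdiff : Differentiable ℝ ψ)
    (hderiv : ∀ s, 0 ≤ s → -η ≤ deriv ψ s ∧ deriv ψ s ≤ 0)
    (t w : ℝ) (ht : 0 < t) (hw : 0 < w) (hM : ψ 0 = η * w) (hwt : w ^ 2 ≤ 3 * t ^ 2)
    (R : ℝ) (hR : t + w / 2 ≤ R) :
    b * (b + 4) * t ^ 4 * (∫ s in (0 : ℝ)..R, s ^ (b - 1) * ψ s) - 4 * t ^ (b + 4) * ψ 0
      + 7 / 18 * t ^ (b + 2) * w ^ 2 * ψ 0 ≤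
    b * (b + 4) * ∫ s in (0 : ℝ)..R, s ^ (b + 3) * ψ s := by
  have hR0 : 0 ≤ R := by linarith
  have hwt1 : w / 2 ≤ t := by nlinarith
  have hc1 : Continuous fun s : ℝ => s ^ (b - 1) * ψ s :=
    (continuous_rpow_const (by linarith)).mul hdiff.continuous
  have hc2 : Continuous fun s : ℝ => s ^ (b + 3) * ψ s :=
    (continuous_rpow_const (by linarith)).mul hdiff.continuous
  have hc3 : Continuous fun s : ℝ => max (w ^ 2 / 4 - (s - t) ^ 2) 0 := by fun_prop
  set κ : ℝ := 14 / 3 * t ^ (b + 2) with hκ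
  have hκ0 : 0 < κ := by positivity
  set F : ℝ → ℝ := fun s => b * s ^ (b + 4) - (b + 4) * t ^ 4 * s ^ b + 4 * t ^ (b + 4) with hF
  have hFd : ∀ x, HasDerivAt F (b * ((b + 4) * x ^ (b + 3)) - (b + 4) * t ^ 4 * (b * x ^ (b - 1))) x := by
    intro x
    have h1 := (hasDerivAt_rpow_const (x := x) (p := b + 4) (Or.inr (by linarith))).const_mul b
    have h2 := (hasDerivAt_rpow_const (x := x) (p := b) (Or.inr (by linarith))).const_mul ((b + 4) * t ^ 4)
    refine HasDerivAt.congr_deriv (f := F) ((h1.sub h2).add_const (4 * t ^ (b + 4))) ?_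
    rw [show b + 4 - 1 = b + 3 by ring]
  let H : ℝ → ℝ := fun r => b * (b + 4) * (∫ s in (0 : ℝ)..r, s ^ (b + 3) * ψ s)
    - b * (b + 4) * t ^ 4 * (∫ s in (0 : ℝ)..r, s ^ (b - 1) * ψ s)
    - (F r - κ * (w ^ 2 / 4)) * ψ r
    + η * κ * ∫ s in (0 : ℝ)..r, max (w ^ 2 / 4 - (s - t) ^ 2) 0
  have hHd : ∀ x, HasDerivAt H (-(F x - κ * (w ^ 2 / 4)) * deriv ψ x
      + η * κ * max (w ^ 2 / 4 - (x - t) ^ 2) 0) x := by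
    intro x
    have d1 := (hc2.integral_hasStrictDerivAt 0 x).hasDerivAt.const_mul (b * (b + 4))
    have d2 := (hc1.integral_hasStrictDerivAt 0 x).hasDerivAt.const_mul (b * (b + 4) * t ^ 4)
    have d3 := (hc3.integral_hasStrictDerivAt 0 x).hasDerivAt.const_mul (η * κ)
    have d4 := ((hFd x).sub_const (κ * (w ^ 2 / 4))).mul (hdiff x).hasDerivAt
    refine HasDerivAt.congr_deriv (f := H) (((d1.sub d2).sub d4).add d3) ?_
    ring
  have hmono : MonotoneOn H (Ici 0) := by
    refine monotoneOn_of_deriv_nonneg (convex_Ici 0)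
      (fun x _ => (hHd x).continuousAt.continuousWithinAt)
      (fun x _ => (hHd x).differentiableAt.differentiableWithinAt) ?_
    intro x hx
    rw [interior_Ici] at hx
    rw [(hHd x).deriv]
    have hx0 : 0 ≤ x := le_of_lt hx
    have h1 := aux_min b t w x hb ht hw hwt hx0
    have h2 := hderiv x hx0
    have hp : 0 ≤ max (w ^ 2 / 4 - (x - t) ^ 2) 0 := le_max_right _ _
    change κ * _ ≤ F x at h1
    have h3 : 0 ≤ F x - κ * (w ^ 2 / 4) + κ * max (w ^ 2 / 4 - (x - t) ^ 2) 0 := by linarith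
    have h4 := mul_nonneg h3 (neg_nonneg.2 h2.2)
    have h5 := mul_nonneg (mul_nonneg hκ0.le hp) (by linarith [h2.1] : 0 ≤ η + deriv ψ x)
    linarith
  have h := hmono self_mem_Ici hR0 hR0
  have hFR : κ * (w ^ 2 / 4) ≤ F R := by
    have h1 := aux_min b t w R hb ht hw hwt hR0
    rw [max_eq_right (by nlinarith)] at h1
    simpa using h1
  have hF0 : F 0 = 4 * t ^ (b + 4) := by
    simp only [hF]
    rw [zero_rpow (by linarith), zero_rpow (by linarith)]; ring
  simp only [H, intervalIntegral.integral_same, hF0, aux_bump t w R hw hwt1 hR] at h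
  have h6 := mul_nonneg (sub_nonneg.2 hFR) (hpos R hR0)
  have h7 : κ * (w ^ 2 / 4) * ψ 0 - η * κ * (w ^ 3 / 6) = 7 / 18 * t ^ (b + 2) * w ^ 2 * ψ 0 := by
    rw [hM, hκ]; ring
  linarith

lemma aux_alg (b η M A t w : ℝ) (hb : 2 ≤ b) (hη : 0 < η) (ht : 0 < t) (hw : 0 < w)
    (hM : M = η * w) (hA : b * A = M * t ^ b) (hwt : w ^ 2 ≤ 3 * t ^ 2) :
    (1 / (b + 4)) * (b * A) ^ ((b + 4) / b) * M ^ (-(4 : ℝ) / b)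
          + (1 / (3 * b * (b + 4) * η ^ (2 : ℕ))) * (b * A) ^ ((b + 2) / b) * M ^ ((2 * b - 2) / b)
          + ((b + 2) ^ (2 : ℕ) / (72 * b * (b + 4) ^ (2 : ℕ) * η ^ (4 : ℕ))) * A * M ^ (4 : ℕ)
    ≤ t ^ 4 * A + (7 / 18 * t ^ (b + 2) * w ^ 2 * M - 4 * t ^ (b + 4) * M) / (b * (b + 4)) := by
  have hb0 : 0 < b := by linarith
  have hM0 : 0 < M := by rw [hM]; positivity
  have f1 : t ^ (b + 4) = t ^ b * t ^ 4 := by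
    rw [show b + 4 = b + (4 : ℕ) by push_cast; ring, rpow_add_natCast ht.ne']
  have f2 : t ^ (b + 2) = t ^ b * t ^ 2 := by
    rw [show b + 2 = b + (2 : ℕ) by push_cast; ring, rpow_add_natCast ht.ne']
  have g1 : (b * A) ^ ((b + 4) / b) * M ^ (-(4 : ℝ) / b) = M * (t ^ b * t ^ 4) := by
    rw [hA, mul_rpow hM0.le (by positivity), ← rpow_mul ht.le, mul_div_cancel₀ _ hb0.ne', f1,
      mul_right_comm, ← rpow_add hM0, show (b + 4) / b + -4 / b = 1 by field_simp; ring, rpow_one]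
  have g2 : (b * A) ^ ((b + 2) / b) * M ^ ((2 * b - 2) / b) = M ^ 3 * (t ^ b * t ^ 2) := by
    rw [hA, mul_rpow hM0.le (by positivity), ← rpow_mul ht.le, mul_div_cancel₀ _ hb0.ne', f2,
      mul_right_comm, ← rpow_add hM0,
      show (b + 2) / b + (2 * b - 2) / b = (3 : ℕ) by push_cast; field_simp; ring, rpow_natCast]
  have hA' : A = M * t ^ b / b := by rw [← hA]; field_simp
  rw [mul_assoc (1 / (b + 4)), g1, mul_assoc (1 / (3 * b * (b + 4) * η ^ 2)), g2, f1, f2, hA']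
  have hT : 0 < t ^ b := by positivity
  generalize t ^ b = T at *
  have key : (b + 2) ^ 2 / (72 * b * (b + 4)) * w ^ 2 ≤ 1 / 18 * t ^ 2 := by
    have : (b + 2) ^ 2 / (72 * b * (b + 4)) ≤ 1 / 54 := by
      rw [div_le_div_iff₀ (by positivity) (by norm_num)]; nlinarith
    nlinarith [mul_le_mul_of_nonneg_right this (sq_nonneg w)]
  have e : t ^ 4 * (M * T / b) + (7 / 18 * (T * t ^ 2) * w ^ 2 * M - 4 * (T * t ^ 4) * M) / (b * (b + 4))
     - (1 / (b + 4) * (M * (T * t ^ 4)) + 1 / (3 * b * (b + 4) * η ^ 2) * (M ^ 3 * (T * t ^ 2))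
      + (b + 2) ^ 2 / (72 * b * (b + 4) ^ 2 * η ^ 4) * (M * T / b) * M ^ 4)
     = M * T * w ^ 2 / (b * (b + 4)) * (1 / 18 * t ^ 2 - (b + 2) ^ 2 / (72 * b * (b + 4)) * w ^ 2) := by
    rw [hM]; field_simp; ring
  have : 0 ≤ M * T * w ^ 2 / (b * (b + 4)) * (1 / 18 * t ^ 2 - (b + 2) ^ 2 / (72 * b * (b + 4)) * w ^ 2) :=
    mul_nonneg (by positivity) (sub_nonneg.2 key)
  linarith


theorem stmt_11 (b η : ℝ) (hb : 2 ≤ b) (hη : 0 < η) (ψ : ℝ → ℝ)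
    (hpos : ∀ s, 0 ≤ s → 0 ≤ ψ s)
    (hanti : AntitoneOn ψ (Ici 0))
    (hdiff : Differentiable ℝ ψ)
    (hderiv : ∀ s, 0 ≤ s → -η ≤ deriv ψ s ∧ deriv ψ s ≤ 0)
    (A : ℝ) (hA : A = ∫ s in Ioi (0 : ℝ), s ^ (b - 1) * ψ s)
    (hApos : 0 < A)
    (hAint : IntegrableOn (fun s => s ^ (b - 1) * ψ s) (Ioi 0)) :
    ENNReal.ofReal
        ((1 / (b + 4)) * (b * A) ^ ((b + 4) / b) * ψ 0 ^ (-(4 : ℝ) / b)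
          + (1 / (3 * b * (b + 4) * η ^ (2 : ℕ))) * (b * A) ^ ((b + 2) / b) * ψ 0 ^ ((2 * b - 2) / b)
          + ((b + 2) ^ (2 : ℕ) / (72 * b * (b + 4) ^ (2 : ℕ) * η ^ (4 : ℕ))) * A * ψ 0 ^ (4 : ℕ))
      ≤ ∫⁻ s in Ioi (0 : ℝ), ENNReal.ofReal (s ^ (b + 3) * ψ s) := by
  have hM : 0 < ψ 0 := by
    rcases (hpos 0 le_rfl).lt_or_eq with h | h
    · exact h
    · exfalso
      have : A = 0 := by
        rw [hA]
        rw [setIntegral_congr_fun (g := fun _ => (0 : ℝ)) measurableSet_Ioi]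
        · simp
        · intro s hs
          have hs0 : (0 : ℝ) ≤ s := le_of_lt hs
          have h1 := hanti self_mem_Ici hs0 hs0
          have h2 := hpos s hs0
          have h3 : ψ s = 0 := by linarith
          simp [h3]
      linarith
  have hb0 : 0 < b := by linarith
  set w := ψ 0 / η with hw
  have hw0 : 0 < w := by positivity
  have hMw : ψ 0 = η * w := by rw [hw]; field_simp
  set t := (b * A / ψ 0) ^ (1 / b) with ht
  have ht0 : 0 < t := by positivity
  have htb : b * A = ψ 0 * t ^ b := by
    rw [ht, ← rpow_mul (by positivity), one_div_mul_cancel hb0.ne', rpow_one]; field_simp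
  have hlow := aux_lower b η hb hη ψ hpos hdiff hderiv hM hAint
  rw [← hA, ← hw] at hlow
  have hwt : w ^ 2 ≤ 3 * t ^ 2 := by
    apply aux_tau b t w hb ht0 hw0
    rw [div_le_iff₀ (by positivity)] at hlow
    have : ψ 0 * w ^ b ≤ ψ 0 * ((b + 1) * t ^ b) := by
      calc _ ≤ _ := hlow
        _ = (b * A) * (b + 1) := by ring
        _ = _ := by rw [htb]; ring
    exact le_of_mul_le_mul_left this hM
  refine (ENNReal.ofReal_le_ofReal (aux_alg b η (ψ 0) A t w hb hη ht0 hw0 hMw htb hwt)).trans ?_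
  set C := (7 / 18 * t ^ (b + 2) * w ^ 2 * ψ 0 - 4 * t ^ (b + 4) * ψ 0) / (b * (b + 4)) with hC
  have hlim : Filter.Tendsto (fun R : ℝ => ENNReal.ofReal
      (t ^ 4 * (∫ s in (0 : ℝ)..R, s ^ (b - 1) * ψ s) + C)) Filter.atTop
      (nhds (ENNReal.ofReal (t ^ 4 * A + C))) := by
    apply ENNReal.tendsto_ofReal
    apply Filter.Tendsto.add_const
    apply Filter.Tendsto.const_mul
    rw [hA]
    exact intervalIntegral_tendsto_integral_Ioi 0 hAint Filter.tendsto_id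
  refine le_of_tendsto hlim ?_
  filter_upwards [Filter.eventually_ge_atTop (t + w / 2)] with R hR
  have hR0 : 0 ≤ R := by linarith
  have hmain := aux_main b η hb hη ψ hpos hdiff hderiv t w ht0 hw0 hMw hwt R hR
  have hc2 : Continuous fun s : ℝ => s ^ (b + 3) * ψ s :=
    (continuous_rpow_const (by linarith)).mul hdiff.continuous
  have h1 : t ^ 4 * (∫ s in (0 : ℝ)..R, s ^ (b - 1) * ψ s) + C ≤
      ∫ s in (0 : ℝ)..R, s ^ (b + 3) * ψ s := by
    have hbb : 0 < b * (b + 4) := by positivity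
    refine le_of_mul_le_mul_left ?_ hbb
    rw [mul_add, hC, mul_div_cancel₀ _ hbb.ne']
    linarith
  refine (ENNReal.ofReal_le_ofReal h1).trans ?_
  rw [intervalIntegral.integral_of_le hR0, ofReal_integral_eq_lintegral_ofReal]
  · exact lintegral_mono_set Ioc_subset_Ioi_self
  · exact (hc2.intervalIntegrable 0 R).1
  · filter_upwards [ae_restrict_mem measurableSet_Ioc] with x hx
    exact mul_nonneg (rpow_nonneg hx.1.le _) (hpos x hx.1.le)
end

section
/- Let g : R^n → [0, M] be an integrable radially symmetric non-increasing function (g(x) = g₀(|x|) with g₀ decreasing), M > 0, n ≥ 1, k ≥ 1, and suppose Λ := n·B_n·∫₀^∞ s^{n+3} g₀(s) ds satisfies the hypotheses that g₀ is differentiable with −η ≤ g₀' ≤ 0 and ∫₀^∞ s^{n−1} g₀(s) ds = k/(n·B_n) > 0. Then Λ ≥ (n/(n+4))·B_n^{−4/n}·k^{(n+4)/n}·g₀(0)^{−4/n} + (1/(3(n+4)η²))·k^{(n+2)/n}·B_n^{−2/n}·g₀(0)^{(2n−2)/n} + ((n+2)²/(72n(n+4)²η⁴))·k·g₀(0)⁴.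 -/
open Real MeasureTheory Set
theorem poly_aux (m : ℕ) (t : ℝ) (ht : 0 ≤ t) :
    0 ≤ ((m:ℝ)+2) * t^(m+4) - ((m:ℝ)+6) * t^m - 4*t^2 + 8 := by
  induction m with
  | zero => norm_num; nlinarith [sq_nonneg (t^2-1)]
  | succ m ih =>
    have key : 0 ≤ t^m * ((t-1)^2 * (((m:ℝ)+2)*((t+1)*(t^2+1)) + (t^3+2*t^2+3*t+4))) := by
      positivity
    push_cast
    have e : ((m:ℝ)+1+2) * t^(m+1+4) - ((m:ℝ)+1+6) * t^(m+1) - 4*t^2 + 8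
      = (((m:ℝ)+2) * t^(m+4) - ((m:ℝ)+6) * t^m - 4*t^2 + 8) + t^m * ((t-1)^2 * (((m:ℝ)+2)*((t+1)*(t^2+1)) + (t^3+2*t^2+3*t+4))) := by ring
    rw [e]; linarith

theorem poly_main (n : ℕ) (hn : 2 ≤ n) (s r : ℝ) (hs : 0 ≤ s) (hr : 0 < r) :
    4 * r^n * (s^2-r^2)^2 ≤ n * s^(n+4) - ((n:ℝ)+4) * r^4 * s^n + 4 * r^(n+4) := by
  obtain ⟨m, rfl⟩ := Nat.exists_eq_add_of_le hn
  obtain ⟨t, rfl⟩ : ∃ t, s = r * t := ⟨s / r, by field_simp⟩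
  have ht : 0 ≤ t := by
    by_contra h; push Not at h; nlinarith
  have h := mul_nonneg (by positivity : 0 ≤ r^(m+6) * t^2) (poly_aux m t ht)
  push_cast
  have e : (2 + (m:ℝ)) * (r*t)^(2+m+4) - (2 + (m:ℝ)+4) * r^4 * (r*t)^(2+m) + 4 * r^(2+m+4)
    - 4 * r^(2+m) * ((r*t)^2-r^2)^2 = r^(m+6) * t^2 * (((m:ℝ)+2) * t^(m+4) - ((m:ℝ)+6) * t^m - 4*t^2 + 8) := by
    ring
  linarith

theorem bathtub (h P q : ℝ → ℝ) (a b lam : ℝ) (ha : 0 ≤ a) (hab : b = a + 1)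
    (hh0 : ∀ s, 0 < s → 0 ≤ h s) (hh1 : ∀ s, 0 < s → h s ≤ 1)
    (hint : IntegrableOn h (Ioi 0)) (hI : ∫ s in Ioi (0:ℝ), h s = 1)
    (hPint : IntegrableOn (fun s => P s * h s) (Ioi 0))
    (hq : Continuous q) (hPq : ∀ s, 0 < s → q s ≤ P s)
    (hin : ∀ s, a ≤ s → s ≤ b → q s ≤ lam)
    (hout : ∀ s, 0 < s → (s ≤ a ∨ b < s) → lam ≤ q s) :
    ∫ s in a..b, q s ≤ ∫ s in Ioi (0:ℝ), P s * h s := by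
  have hle : a ≤ b := by linarith
  have hsub : Ioc a b ⊆ Ioi 0 := fun x hx => lt_of_le_of_lt ha hx.1
  have hqi : IntegrableOn (fun s => q s - lam) (Ioc a b) :=
    ((hq.sub continuous_const).continuousOn.integrableOn_Icc).mono_set Ioc_subset_Icc_self
  have h1 : ∫ s in Ioi (0:ℝ), (Ioc a b).indicator (fun s => q s - lam) s
      ≤ ∫ s in Ioi (0:ℝ), (P s * h s - lam * h s) := by
    apply setIntegral_mono_on
    · exact ((integrable_indicator_iff measurableSet_Ioc).2 hqi).integrableOn
    · exact hPint.sub (hint.const_mul lam)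
    · exact measurableSet_Ioi
    · intro s hs
      have hs : 0 < s := hs
      have := hh0 s hs
      have := hh1 s hs
      have := hPq s hs
      by_cases hm : s ∈ Ioc a b
      · rw [indicator_of_mem hm]
        have := hin s hm.1.le hm.2
        nlinarith
      · rw [indicator_of_notMem hm]
        have : lam ≤ q s := by
          rcases le_or_gt s a with h' | h'
          · exact hout s hs (Or.inl h')
          · exact hout s hs (Or.inr (by by_contra hc; exact hm ⟨h', not_lt.1 hc⟩))
        nlinarith
  rw [setIntegral_indicator measurableSet_Ioc, inter_eq_right.2 hsub,
    integral_sub hPint (hint.const_mul lam), integral_const_mul, hI,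
    ← intervalIntegral.integral_of_le hle,
    intervalIntegral.integral_sub (hq.intervalIntegrable _ _) (by simp)] at h1
  simp at h1
  rw [hab] at h1 ⊢
  linarith

open Filter Topology in
theorem decay (f : ℝ → ℝ) (hf0 : ∀ s, 0 ≤ s → 0 ≤ f s) (hanti : AntitoneOn f (Ici 0))
    (m : ℕ) (hint : IntegrableOn (fun s => s^m * f s) (Ioi 0)) :
    Tendsto (fun s => s^(m+1) * f s) atTop (𝓝 0) := by
  have t1 := intervalIntegral_tendsto_integral_Ioi 0 hint tendsto_id
  have t2 := intervalIntegral_tendsto_integral_Ioi 0 hint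
    (tendsto_id.atTop_div_const (by norm_num : (0:ℝ) < 2))
  have t3 := (t1.sub t2).const_mul ((2:ℝ)^(m+1))
  rw [sub_self, mul_zero] at t3
  refine tendsto_of_tendsto_of_tendsto_of_le_of_le' tendsto_const_nhds t3 ?_ ?_
  · filter_upwards [eventually_gt_atTop 0] with s hs
    have := hf0 s hs.le
    positivity
  · filter_upwards [eventually_gt_atTop 0] with s hs
    simp only [id]
    have ii : ∀ a b : ℝ, 0 ≤ a → a ≤ b → IntervalIntegrable (fun s => s^m * f s) volume a b := by
      intro a b ha hab
      rw [intervalIntegrable_iff_integrableOn_Ioc_of_le hab]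
      exact hint.mono_set (fun x hx => lt_of_le_of_lt ha hx.1)
    rw [intervalIntegral.integral_interval_sub_left (ii 0 s le_rfl hs.le) (ii 0 (s/2) le_rfl (by linarith))]
    have : ∫ t in (s/2)..s, (s/2)^m * f s ≤ ∫ t in (s/2)..s, t^m * f t := by
      apply intervalIntegral.integral_mono_on (by linarith) (by simp) (ii _ _ (by linarith) (by linarith))
      intro x hx
      have h1 : f s ≤ f x := hanti (show (0:ℝ) ≤ x by linarith [hx.1]) hs.le hx.2
      have h2 := hf0 s hs.le
      have h3 : (s/2)^m ≤ x^m := pow_le_pow_left₀ (by linarith) hx.1 m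
      exact mul_le_mul h3 h1 h2 (by have := hx.1; have : 0 ≤ x := by linarith
                                    positivity)
    rw [intervalIntegral.integral_const, smul_eq_mul] at this
    calc s^(m+1) * f s = 2^(m+1) * ((s - s/2) * ((s/2)^m * f s)) := by
          rw [div_pow]; field_simp; ring
      _ ≤ _ := by gcongr

open Filter Topology in
theorem moment (f : ℝ → ℝ) (hf0 : ∀ s, 0 ≤ s → 0 ≤ f s) (hanti : AntitoneOn f (Ici 0))
    (hd : Differentiable ℝ f) (hder : ∀ s, 0 ≤ s → deriv f s ≤ 0)
    (m : ℕ) (hint : IntegrableOn (fun s => s^m * f s) (Ioi 0)) :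
    IntegrableOn (fun s => s^(m+1) * (-deriv f s)) (Ioi 0) ∧
    ∫ s in Ioi (0:ℝ), s^(m+1) * (-deriv f s) = ((m:ℝ)+1) * ∫ s in Ioi (0:ℝ), s^m * f s := by
  have hc : Continuous (fun s => s^m * f s) := (continuous_pow m).mul hd.continuous
  set W : ℝ → ℝ := fun s => ((m:ℝ)+1) * (∫ t in (0:ℝ)..s, t^m * f t) - s^(m+1) * f s with hW
  have hder' : ∀ s, HasDerivAt W (s^(m+1) * (-deriv f s)) s := by
    intro s
    have h1 := ((hc.integral_hasStrictDerivAt 0 s).hasDerivAt).const_mul ((m:ℝ)+1)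
    have h2 := (hasDerivAt_pow (m+1) s).mul (hd s).hasDerivAt
    refine (h1.sub h2).congr_deriv ?_
    push_cast
    ring
  have hlim : Tendsto W atTop (𝓝 (((m:ℝ)+1) * (∫ s in Ioi (0:ℝ), s^m * f s))) := by
    have := ((intervalIntegral_tendsto_integral_Ioi 0 hint tendsto_id).const_mul ((m:ℝ)+1)).sub
      (decay f hf0 hanti m hint)
    simpa using this
  have hnn : ∀ x ∈ Ioi (0:ℝ), 0 ≤ x^(m+1) * (-deriv f x) := by
    intro x hx
    have hx : 0 < x := hx
    have := hder x hx.le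
    have : 0 ≤ -deriv f x := by linarith
    positivity
  refine ⟨integrableOn_Ioi_deriv_of_nonneg' (fun x _ => hder' x) hnn hlim, ?_⟩
  rw [integral_Ioi_of_hasDerivAt_of_nonneg' (fun x _ => hder' x) hnn hlim]
  simp [hW]

open Filter Topology in
theorem moment0 (f : ℝ → ℝ) (hf0 : ∀ s, 0 ≤ s → 0 ≤ f s) (hanti : AntitoneOn f (Ici 0))
    (hd : Differentiable ℝ f) (hder : ∀ s, 0 ≤ s → deriv f s ≤ 0)
    (m : ℕ) (hint : IntegrableOn (fun s => s^m * f s) (Ioi 0)) :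
    IntegrableOn (fun s => (-deriv f s)) (Ioi 0) ∧
    ∫ s in Ioi (0:ℝ), (-deriv f s) = f 0 := by
  have hlim : Tendsto (fun s => - f s) atTop (𝓝 0) := by
    have h := decay f hf0 hanti m hint
    have h0 : Tendsto f atTop (𝓝 0) := by
      refine tendsto_of_tendsto_of_tendsto_of_le_of_le' tendsto_const_nhds h ?_ ?_
      · filter_upwards [eventually_ge_atTop 0] with s hs using hf0 s hs
      · filter_upwards [eventually_ge_atTop 1] with s hs
        have := hf0 s (by linarith)
        have := one_le_pow₀ hs (n := m+1)
        nlinarith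
    simpa using h0.neg
  have hnn : ∀ x ∈ Ioi (0:ℝ), 0 ≤ (-deriv f x) := by
    intro x hx
    have hx : 0 < x := hx
    have := hder x hx.le
    linarith
  have hder' : ∀ x ∈ Ici (0:ℝ), HasDerivAt (fun s => - f s) (-deriv f x) x := fun x _ => (hd x).hasDerivAt.neg
  refine ⟨integrableOn_Ioi_deriv_of_nonneg' hder' hnn hlim, ?_⟩
  rw [integral_Ioi_of_hasDerivAt_of_nonneg' hder' hnn hlim]
  simp

theorem int_quartic (C m a b : ℝ) : ∫ s in a..b, C * (s^2-m)^2 =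
    C * ((b^5 - a^5)/5 - 2*m*(b^3-a^3)/3 + m^2*(b-a)) := by
  have h : ∀ x ∈ uIcc a b, HasDerivAt (fun s => C * (s^5/5 - 2*m*(s^3/3) + m^2*s)) (C * (x^2-m)^2) x := by
    intro x _
    have h := (((((hasDerivAt_pow 5 x).div_const 5).sub
      (((hasDerivAt_pow 3 x).div_const 3).const_mul (2*m))).add ((hasDerivAt_id x).const_mul (m^2))).const_mul C)
    refine h.congr_deriv ?_
    push_cast
    ring
  rw [intervalIntegral.integral_eq_sub_of_hasDerivAt h ((by fun_prop : Continuous fun s : ℝ => C * (s^2-m)^2).intervalIntegrable _ _)]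
  ring

theorem int_quad (C m a b : ℝ) : ∫ s in a..b, C * (s-m)^2 =
    C * ((b-m)^3/3 - (a-m)^3/3) := by
  have h : ∀ x ∈ uIcc a b, HasDerivAt (fun s => C * ((s-m)^3/3)) (C * (x-m)^2) x := by
    intro x _
    have h := (((((hasDerivAt_id x).sub_const m).pow 3).div_const 3).const_mul C)
    refine h.congr_deriv ?_
    norm_num
  rw [intervalIntegral.integral_eq_sub_of_hasDerivAt h ((by fun_prop : Continuous fun s : ℝ => C * (s-m)^2).intervalIntegrable _ _)]
  ring

theorem int_lin (C D a b : ℝ) : ∫ s in a..b, C * (1 + D * (2*s-1)) =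
    C * ((b-a) + D * (b^2-b - (a^2-a))) := by
  have h : ∀ x ∈ uIcc a b, HasDerivAt (fun s => C * (s + D * (s^2-s))) (C * (1 + D * (2*x-1))) x := by
    intro x _
    have h := (((hasDerivAt_id x).add (((hasDerivAt_pow 2 x).sub (hasDerivAt_id x)).const_mul D)).const_mul C)
    refine h.congr_deriv ?_
    norm_num
  rw [intervalIntegral.integral_eq_sub_of_hasDerivAt h ((by fun_prop : Continuous fun s : ℝ => C * (1 + D * (2*s-1))).intervalIntegrable _ _)]
  ring

set_option maxHeartbeats 2000000 in
theorem core (n : ℕ) (hn : 1 ≤ n) (h : ℝ → ℝ) (r Y : ℝ) (hr : 0 ≤ r)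
    (hh0 : ∀ s, 0 < s → 0 ≤ h s) (hh1 : ∀ s, 0 < s → h s ≤ 1)
    (hint : IntegrableOn h (Ioi 0)) (hI : ∫ s in Ioi (0:ℝ), h s = 1)
    (hXi : IntegrableOn (fun s => s^n * h s) (Ioi 0))
    (hX : ∫ s in Ioi (0:ℝ), s^n * h s = r^n)
    (hYi : IntegrableOn (fun s => s^(n+4) * h s) (Ioi 0))
    (hY : ∫ s in Ioi (0:ℝ), s^(n+4) * h s = Y) :
    n * r^(n+4) + r^(n+2)/3 + ((n:ℝ)+2)^2/(72*n*((n:ℝ)+4)) * r^n ≤ n * Y := by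
  have hnR : (1:ℝ) ≤ n := by exact_mod_cast hn
  have comb : ∀ a b c : ℝ, IntegrableOn (fun s => (a * s^(n+4) + b * s^n + c) * h s) (Ioi 0) ∧
      ∫ s in Ioi (0:ℝ), (a * s^(n+4) + b * s^n + c) * h s = a * Y + b * r^n + c := by
    intro a b c
    have e : (fun s => (a * s^(n+4) + b * s^n + c) * h s) =
      fun s => a * (s^(n+4) * h s) + b * (s^n * h s) + c * h s := by
      funext s; ring
    have i1 := hYi.const_mul a
    have i2 := hXi.const_mul b
    have i3 := hint.const_mul c
    rw [e]
    refine ⟨(i1.add i2).add i3, ?_⟩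
    rw [integral_add (f := fun s => a * (s^(n+4) * h s) + b * (s^n * h s)) (i1.add i2) i3, integral_add i1 i2, integral_const_mul, integral_const_mul,
      integral_const_mul, hX, hY, hI, mul_one]
  have hr2 : 1/2 ≤ r := by
    have hb := bathtub h (fun s => s^n) (fun s => (1/2)^n * (1 + n * (2*s-1))) 0 1
      ((1/2)^n * (1 + n)) le_rfl (by norm_num) hh0 hh1 hint hI hXi (by fun_prop)
      (by
        intro s hs
        have := one_add_mul_le_pow (show (-2:ℝ) ≤ 2*s-1 by linarith) n
        calc (1/2:ℝ)^n * (1 + n * (2*s-1)) ≤ (1/2)^n * (1 + (2*s-1))^n := by gcongr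
          _ = s^n := by rw [← mul_pow]; congr 1; ring)
      (by
        intro s h0 h1
        gcongr
        nlinarith)
      (by
        intro s h0 h1
        rcases h1 with h1 | h1
        · linarith
        · gcongr
          nlinarith)
    rw [int_lin, hX] at hb
    norm_num at hb
    exact (pow_le_pow_iff_left₀ (by norm_num) hr (by omega)).1 hb
  have hrp : 0 < r := by linarith
  rcases Nat.lt_or_ge n 2 with h2 | h2
  · have hn1 : n = 1 := by omega
    subst hn1
    obtain ⟨ci, ce⟩ := comb 1 ((r^2+1/6)^2 - 2*(r^2+1/6)*(3*r^2)) (2*(r^2+1/6)*(2*r^3))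
    have hb := bathtub h _ (fun s => (4*(r^2+1/6)*r) * (s-r)^2) (r-1/2) (r+1/2)
      ((4*(r^2+1/6)*r) * (1/4)) (by linarith) (by ring) hh0 hh1 hint hI ci (by fun_prop)
      (by
        intro s hs
        have k1 : 0 ≤ s * (s^2 - (r^2+1/6))^2 := by positivity
        have k2 : 0 ≤ 2*(r^2+1/6) * (s * (s-r)^2) := by positivity
        simp only [Nat.reduceAdd]
        nlinarith)
      (by
        intro s h0 h1
        gcongr
        nlinarith)
      (by
        intro s h0 h1
        gcongr
        rcases h1 with h1 | h1 <;> nlinarith)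
    rw [int_quad, ce] at hb
    norm_num at hb ⊢
    nlinarith
  · have hn2 : (2:ℝ) ≤ n := by exact_mod_cast h2
    obtain ⟨ci, ce⟩ := comb n (-(((n:ℝ)+4) * r^4)) (4 * r^(n+4))
    have hPq : ∀ s, 0 < s → 4 * r^n * (s^2-r^2)^2 ≤ n * s^(n+4) + (-(((n:ℝ)+4) * r^4)) * s^n + 4 * r^(n+4) := by
      intro s hs
      have := poly_main n h2 s r hs.le hrp
      linarith
    have hrn : 0 < r^n := by positivity
    have main : 4 * r^n * (r^2/3 - 1/20) ≤ n * Y + (-(((n:ℝ)+4) * r^4)) * r^n + 4 * r^(n+4) := by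
      rcases le_or_gt (r^2) (1/2) with hm | hm
      · have hb := bathtub h _ (fun s => 4*r^n * (s^2-r^2)^2) 0 1 (4*r^n*(1-r^2)^2) le_rfl
          (by norm_num) hh0 hh1 hint hI ci (by fun_prop) hPq
          (by
            intro s h0 h1
            have : s^2 ≤ 1 := by nlinarith
            gcongr 4*r^n * ?_
            nlinarith [sq_nonneg s])
          (by
            intro s h0 h1
            rcases h1 with h1 | h1
            · linarith
            · have : 1 ≤ s^2 := by nlinarith
              gcongr 4*r^n * ?_
              nlinarith)
        rw [int_quartic, ce] at hb
        refine le_trans ?_ hb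
        gcongr 4*r^n * ?_
        nlinarith [sq_nonneg (r^2-1/2)]
      · set c := √(r^2-1/4) with hc
        have hc2 : r^2 = c^2 + 1/4 := by rw [hc, Real.sq_sqrt (by linarith)]; ring
        have hc0 : 0 ≤ c := Real.sqrt_nonneg _
        have hc1 : 1/2 ≤ c := by nlinarith
        have hb := bathtub h _ (fun s => 4*r^n * (s^2-r^2)^2) (c-1/2) (c+1/2) (4*r^n*c^2) (by linarith)
          (by ring) hh0 hh1 hint hI ci (by fun_prop) hPq
          (by
            intro s h0 h1
            have a1 : s^2 ≤ (c+1/2)^2 := by apply pow_le_pow_left₀ <;> linarith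
            have a2 : (c-1/2)^2 ≤ s^2 := by apply pow_le_pow_left₀ <;> linarith
            gcongr 4*r^n * ?_
            rw [hc2]
            apply sq_le_sq'  <;> nlinarith)
          (by
            intro s h0 h1
            gcongr 4*r^n * ?_
            rw [hc2]
            rcases h1 with h1 | h1
            · have a2 : s^2 ≤ (c-1/2)^2 := by apply pow_le_pow_left₀ <;> linarith
              nlinarith
            · have a2 : (c+1/2)^2 ≤ s^2 := by apply pow_le_pow_left₀ <;> linarith
              nlinarith)
        rw [int_quartic, ce] at hb
        refine le_trans (le_of_eq ?_) hb
        rw [hc2]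
        ring
    have hcoef : ((n:ℝ)+2)^2/(72*n*((n:ℝ)+4)) ≤ 1/54 := by
      rw [div_le_div_iff₀ (by positivity) (by norm_num)]
      nlinarith
    have hq : ((n:ℝ)+2)^2/(72*n*((n:ℝ)+4)) * r^n ≤ 1/54 * r^n := by gcongr
    have hr4 : r^n * (1/4) ≤ r^n * r^2 := by gcongr; nlinarith
    have e1 : r^(n+4) = r^n * r^4 := by ring
    have e2 : r^(n+2) = r^n * r^2 := by ring
    rw [e1] at main ⊢
    rw [e2]
    generalize ((n:ℝ)+2)^2/(72*n*((n:ℝ)+4)) * r^n = w at hq ⊢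
    have main2 : 4/3 * (r^n * r^2) - 1/5 * r^n ≤ n * Y - n * (r^n * r^4) := by linarith
    linarith

theorem stmt_16 (n k : ℕ) (hn : 1 ≤ n) (hk : 1 ≤ k) (M η : ℝ) (hM : 0 < M) (hη : 0 < η)
    (B : ℝ)
    (hB : B = (volume (Metric.ball (0 : EuclideanSpace ℝ (Fin n)) 1)).toReal)
    (g : EuclideanSpace ℝ (Fin n) → ℝ) (g₀ : ℝ → ℝ)
    (hrad : ∀ x, g x = g₀ ‖x‖)
    (hg0 : ∀ s, 0 ≤ s → 0 ≤ g₀ s) (hgM : ∀ s, 0 ≤ s → g₀ s ≤ M)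
    (hanti : AntitoneOn g₀ (Ici 0))
    (hdiff : Differentiable ℝ g₀)
    (hderiv : ∀ s, 0 ≤ s → -η ≤ deriv g₀ s ∧ deriv g₀ s ≤ 0)
    (hAint : IntegrableOn (fun s => s ^ ((n : ℝ) - 1) * g₀ s) (Ioi 0))
    (hA : (∫ s in Ioi (0 : ℝ), s ^ ((n : ℝ) - 1) * g₀ s) = k / (n * B))
    (hDint : IntegrableOn (fun s => s ^ ((n : ℝ) + 3) * g₀ s) (Ioi 0))
    (Λ : ℝ) (hΛ : Λ = n * B * ∫ s in Ioi (0 : ℝ), s ^ ((n : ℝ) + 3) * g₀ s) :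
    (n / ((n : ℝ) + 4)) * B ^ (-(4 : ℝ) / n) * (k : ℝ) ^ (((n : ℝ) + 4) / n) * g₀ 0 ^ (-(4 : ℝ) / n)
      + (1 / (3 * ((n : ℝ) + 4) * η ^ (2 : ℕ))) * (k : ℝ) ^ (((n : ℝ) + 2) / n)
          * B ^ (-(2 : ℝ) / n) * g₀ 0 ^ ((2 * (n : ℝ) - 2) / n)
      + (((n : ℝ) + 2) ^ (2 : ℕ) / (72 * n * ((n : ℝ) + 4) ^ (2 : ℕ) * η ^ (4 : ℕ)))
          * (k : ℝ) * g₀ 0 ^ (4 : ℕ)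
    ≤ Λ := by
  have hnR : (0:ℝ) < n := by exact_mod_cast hn
  have hkR : (0:ℝ) < k := by exact_mod_cast hk
  have hBp : 0 < B := by
    rw [hB]
    exact ENNReal.toReal_pos (Metric.measure_ball_pos volume _ one_pos).ne' measure_ball_lt_top.ne
  obtain ⟨p, rfl⟩ : ∃ p, n = p + 1 := ⟨n - 1, by omega⟩
  have eA : ∀ s ∈ Ioi (0:ℝ), s ^ (((p+1:ℕ):ℝ) - 1) * g₀ s = s^p * g₀ s := by
    intro s hs
    rw [← Real.rpow_natCast s p]
    push_cast
    rw [add_sub_cancel_right]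
  have eD : ∀ s ∈ Ioi (0:ℝ), s ^ (((p+1:ℕ):ℝ) + 3) * g₀ s = s^(p+4) * g₀ s := by
    intro s hs
    rw [← Real.rpow_natCast s (p+4)]
    congr 2
    push_cast
    ring
  rw [integrableOn_congr_fun eA measurableSet_Ioi] at hAint
  rw [integrableOn_congr_fun eD measurableSet_Ioi] at hDint
  rw [setIntegral_congr_fun measurableSet_Ioi eA] at hA
  rw [setIntegral_congr_fun measurableSet_Ioi eD] at hΛ
  have hGp : 0 < g₀ 0 := by
    rcases (hg0 0 le_rfl).lt_or_eq with h | h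
    · exact h
    · exfalso
      have hz : ∀ s ∈ Ioi (0:ℝ), s^p * g₀ s = 0 := by
        intro s hs
        have hs : 0 < s := hs
        have h1 : g₀ s ≤ g₀ 0 := hanti (show (0:ℝ) ≤ 0 from le_rfl) hs.le hs.le
        have h2 := hg0 s hs.le
        have : g₀ s = 0 := by linarith
        rw [this, mul_zero]
      rw [setIntegral_congr_fun measurableSet_Ioi hz] at hA
      have : 0 < (k:ℝ) / (((p+1:ℕ):ℝ) * B) := by positivity
      simp only [integral_zero] at hA
      linarith
  set G := g₀ 0 with hG
  obtain ⟨L, hL⟩ : ∃ L, L = G / η := ⟨_, rfl⟩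
  have hLp : 0 < L := by rw [hL]; positivity
  set f : ℝ → ℝ := fun s => g₀ (L * s) / G with hf
  have hfd : ∀ s, HasDerivAt f (deriv g₀ (L*s) / η) s := by
    intro s
    have h1 : HasDerivAt (fun s => L * s) L s := by simpa using (hasDerivAt_id s).const_mul L
    have h2 := ((hdiff (L*s)).hasDerivAt.comp s h1).div_const G
    refine h2.congr_deriv ?_
    rw [hL]
    field_simp
  have hfder : ∀ s, deriv f s = deriv g₀ (L*s) / η := fun s => (hfd s).deriv
  have hf0 : ∀ s, 0 ≤ s → 0 ≤ f s := fun s hs => div_nonneg (hg0 _ (by positivity)) hGp.le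
  have hfanti : AntitoneOn f (Ici 0) := by
    intro x hx y hy hxy
    have hx : 0 ≤ x := hx
    have hy : 0 ≤ y := hy
    have : g₀ (L*y) ≤ g₀ (L*x) := hanti (show 0 ≤ L*x by positivity) (show 0 ≤ L*y by positivity)
      (by gcongr)
    simp only [hf]
    gcongr
  have hfdiff : Differentiable ℝ f := fun s => (hfd s).differentiableAt
  have hfle : ∀ s, 0 ≤ s → deriv f s ≤ 0 := by
    intro s hs
    rw [hfder]
    exact div_nonpos_of_nonpos_of_nonneg (hderiv _ (by positivity)).2 hη.le
  have hfge : ∀ s, 0 ≤ s → -1 ≤ deriv f s := by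
    intro s hs
    rw [hfder, le_div_iff₀ hη]
    linarith [(hderiv (L*s) (by positivity)).1]
  have scal : ∀ m : ℕ, IntegrableOn (fun s => s^m * g₀ s) (Ioi 0) →
      IntegrableOn (fun s => s^m * f s) (Ioi 0) ∧
      (∫ s in Ioi (0:ℝ), s^m * g₀ s) = G * L^(m+1) * ∫ s in Ioi (0:ℝ), s^m * f s := by
    intro m hm
    have e : (fun s => s^m * f s) = fun s => (G * L^m)⁻¹ * ((L*s)^m * g₀ (L*s)) := by
      funext s
      simp only [hf]
      rw [mul_pow]
      field_simp
    constructor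
    · rw [e]
      have := (integrableOn_Ioi_comp_mul_left_iff (fun s => s^m * g₀ s) 0 hLp).2 (by simpa using hm)
      exact this.const_mul _
    · rw [e, integral_const_mul, integral_comp_mul_left_Ioi (fun s => s^m * g₀ s) 0 hLp, mul_zero,
        smul_eq_mul]
      field_simp
      ring
  obtain ⟨i1, s1⟩ := scal p hAint
  obtain ⟨i2, s2⟩ := scal (p+4) hDint
  obtain ⟨m1, e1⟩ := moment f hf0 hfanti hfdiff hfle p i1
  obtain ⟨m2, e2⟩ := moment f hf0 hfanti hfdiff hfle (p+4) i2
  obtain ⟨m0, e0⟩ := moment0 f hf0 hfanti hfdiff hfle p i1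
  have hf1 : f 0 = 1 := by
    simp only [hf, mul_zero]
    exact div_self hGp.ne'
  set I1 := ∫ s in Ioi (0:ℝ), s^p * f s with hI1
  set I2 := ∫ s in Ioi (0:ℝ), s^(p+4) * f s with hI2
  have hkI : (k:ℝ) = B * G * L^(p+1) * (((p:ℝ)+1) * I1) := by
    rw [s1] at hA
    push_cast at hA
    rw [eq_div_iff (by positivity)] at hA
    linarith
  have hXp : 0 < ((p:ℝ)+1) * I1 := by
    rw [hkI] at hkR
    exact pos_of_mul_pos_right hkR (by positivity)
  obtain ⟨r, hr⟩ : ∃ r : ℝ, r = (((p:ℝ)+1) * I1) ^ (((p+1:ℕ):ℝ)⁻¹) := ⟨_, rfl⟩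
  have hrp : 0 < r := by rw [hr]; positivity
  have hrn : r^(p+1) = ((p:ℝ)+1) * I1 := by
    rw [hr]
    exact Real.rpow_inv_natCast_pow hXp.le (by omega)
  have hcore := core (p+1) hn (fun s => - deriv f s) r (((p:ℝ)+4+1) * I2) hrp.le
    (fun s hs => by have := hfle s hs.le; linarith)
    (fun s hs => by have := hfge s hs.le; linarith)
    m0 (by rw [e0, hf1]) m1 (by rw [e1, hrn])
    (by convert m2 using 3) (by
      have : p + 1 + 4 = p + 4 + 1 := by ring
      rw [this, e2]
      push_cast
      ring)
  rw [← hrn] at hkI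
  -- rewriting the real powers
  have hN : ((p+1:ℕ):ℝ) ≠ 0 := hnR.ne'
  have hbase : (k:ℝ) / (B * G) = (L * r)^(p+1) := by
    rw [hkI, mul_pow]
    field_simp
  have hroot : ((k:ℝ) / (B * G)) ^ (1 / ((p+1:ℕ):ℝ)) = L * r := by
    rw [hbase, one_div]
    exact Real.pow_rpow_inv_natCast (by positivity) (by omega)
  have hpow : ∀ j : ℕ, ((k:ℝ) / (B * G)) ^ ((j:ℝ) / ((p+1:ℕ):ℝ)) = (L*r)^j := by
    intro j
    rw [← hroot, ← Real.rpow_natCast, ← Real.rpow_mul (by positivity)]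
    congr 1
    field_simp
  have hsplit : ∀ x : ℝ, ((k:ℝ) / (B * G)) ^ x = (k:ℝ)^x * B^(-x) * G^(-x) := by
    intro x
    rw [Real.div_rpow (by positivity) (by positivity), Real.mul_rpow (by positivity) (by positivity),
      Real.rpow_neg (by positivity), Real.rpow_neg (by positivity)]
    field_simp
  have T1 : B ^ (-(4 : ℝ) / ((p+1:ℕ):ℝ)) * (k : ℝ) ^ ((((p+1:ℕ):ℝ) + 4) / ((p+1:ℕ):ℝ)) * G ^ (-(4 : ℝ) / ((p+1:ℕ):ℝ))
      = k * (L*r)^4 := by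
    rw [← hpow 4, hsplit]
    have : (((p+1:ℕ):ℝ) + 4) / ((p+1:ℕ):ℝ) = 1 + ((4:ℕ):ℝ) / ((p+1:ℕ):ℝ) := by
      rw [add_div, div_self hN]; norm_num
    rw [this, Real.rpow_add hkR, Real.rpow_one, neg_div]
    push_cast
    ring
  have T2 : (k : ℝ) ^ ((((p+1:ℕ):ℝ) + 2) / ((p+1:ℕ):ℝ)) * B ^ (-(2 : ℝ) / ((p+1:ℕ):ℝ))
      * G ^ ((2 * ((p+1:ℕ):ℝ) - 2) / ((p+1:ℕ):ℝ))
      = k * G^2 * (L*r)^2 := by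
    rw [← hpow 2, hsplit]
    have h1 : (((p+1:ℕ):ℝ) + 2) / ((p+1:ℕ):ℝ) = 1 + ((2:ℕ):ℝ) / ((p+1:ℕ):ℝ) := by
      rw [add_div, div_self hN]; norm_num
    have h2 : (2 * ((p+1:ℕ):ℝ) - 2) / ((p+1:ℕ):ℝ) = ((2:ℕ):ℝ) + -(((2:ℕ):ℝ) / ((p+1:ℕ):ℝ)) := by
      rw [sub_div, mul_div_assoc, div_self hN]; norm_num; ring
    rw [h1, h2, Real.rpow_add hkR, Real.rpow_one, Real.rpow_add hGp, Real.rpow_natCast, neg_div]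
    push_cast
    ring
  have hGL : G = L * η := by rw [hL]; field_simp
  rw [s2] at hΛ
  set N : ℝ := ((p+1:ℕ):ℝ) with hNdef
  have hpN : (p:ℝ) + 4 + 1 = N + 4 := by rw [hNdef]; push_cast; ring
  rw [hpN] at hcore
  have hfac : 0 < B * G * L^(p+5) / (N+4) := by positivity
  have hfin := mul_le_mul_of_nonneg_left hcore hfac.le
  calc _ = (N / (N + 4)) * (B ^ (-(4 : ℝ) / N) * (k : ℝ) ^ ((N + 4) / N) * G ^ (-(4 : ℝ) / N))
      + (1 / (3 * (N + 4) * η ^ (2 : ℕ))) * ((k : ℝ) ^ ((N + 2) / N)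
          * B ^ (-(2 : ℝ) / N) * G ^ ((2 * N - 2) / N))
      + ((N + 2) ^ (2 : ℕ) / (72 * N * (N + 4) ^ (2 : ℕ) * η ^ (4 : ℕ)))
          * (k : ℝ) * G ^ (4 : ℕ) := by ring
    _ = B * G * L^(p+5) / (N+4) * (N * r ^ (p + 1 + 4) + r ^ (p + 1 + 2) / 3
          + (N + 2) ^ 2 / (72 * N * (N + 4)) * r ^ (p + 1)) := by
        rw [T1, T2, hkI, hGL]
        field_simp
        ring
    _ ≤ _ := hfin
    _ = Λ := by
        rw [hΛ]
        field_simp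
end
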